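/- Fix positive reals α, h̄, c̄, ρ̄_s, s, e, m, n, T = tanθ and K ≥ 0, and assume K = 0. Define, for η > 0, λ±(η) := (−(a + α h̄ η²) ± √((a − α h̄ η²)² + 4 α η² a m h̄ c̄/ρ̄_s)) / 2. Then λ₊(η) and λ₋(η) are eigenvalues of A(0,η), and as η → +∞ one has λ₊(η) → a·(m c̄/ρ̄_s − 1) and λ₋(η)/η² → −α h̄. -/

import Mathlib

/-- The Fourier symbol `A(ξ,η) = A₀ + iξ·A₁ − (ξ²+η²)·A₂` of the linearized
landscape evolution system about the constant state `(h̄, c̄, 0)`, with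
`a = s·ρ̄ₛ/(e·h̄)` and slope parameter `T = tan θ`. -/
noncomputable def landA (α hb cb ρs s e m n T K : ℝ) (ξ η : ℝ) :
    Matrix (Fin 3) (Fin 3) ℂ :=
  ((!![0, 0, 0;
       (s * ρs / (e * hb)) * m * cb / hb, -(s * ρs / (e * hb)), 0;
       -((s * ρs / (e * hb)) * m * cb / ρs), (s * ρs / (e * hb)) * hb / ρs, 0] :
      Matrix (Fin 3) (Fin 3) ℝ).map Complex.ofReal)
  + (Complex.I * (ξ : ℂ)) •
    ((!![-T, 0, 0;
         -(α * (s * ρs / (e * hb)) * n * cb / T), -T,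
           -(α * (s * ρs / (e * hb)) * n * cb / T);
         α * (s * ρs / (e * hb)) * n * hb * cb / (ρs * T), 0,
           α * (s * ρs / (e * hb)) * n * hb * cb / (ρs * T)] :
        Matrix (Fin 3) (Fin 3) ℝ).map Complex.ofReal)
  - (((ξ ^ 2 + η ^ 2 : ℝ) : ℂ)) •
    ((!![α * hb, 0, α * hb; 0, 0, 0; 0, 0, K] :
        Matrix (Fin 3) (Fin 3) ℝ).map Complex.ofReal)

/-- Spectral stability: every eigenvalue (root of the characteristic
polynomial) has strictly negative real part. -/
def SpectrallyStable (A : Matrix (Fin 3) (Fin 3) ℂ) : Prop :=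
  ∀ z : ℂ, A.charpoly.IsRoot z → z.re < 0

open Filter

/-- The two nonzero eigenvalues `λ±(η)` of `A(0,η)` when `K = 0`. -/
noncomputable def lamP (α hb cb ρs a m : ℝ) (η : ℝ) : ℝ :=
  (-(a + α * hb * η ^ 2) +
      Real.sqrt ((a - α * hb * η ^ 2) ^ 2 + 4 * α * η ^ 2 * a * m * hb * cb / ρs)) / 2

noncomputable def lamM (α hb cb ρs a m : ℝ) (η : ℝ) : ℝ :=
  (-(a + α * hb * η ^ 2) -
      Real.sqrt ((a - α * hb * η ^ 2) ^ 2 + 4 * α * η ^ 2 * a * m * hb * cb / ρs)) / 2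

/-!
For `K = 0` and `ξ = 0`, put `b = αh̄η²` and `k = amc̄/ρ̄ₛ`. The characteristic polynomial of
`A(0,η)` is `X((X + a)(X + b) - bk)`, whose quadratic factor has the roots `λ±(η)`. Completing
the square in the discriminant, `(a - b)² + 4bk = (b + 2k - a)² + 4k(a - k)`, so its square root
is `b + 2k - a + o(1)` as `b → ∞` and `λ₊ → k - a`; the trace identity
`λ₊ + λ₋ = -(a + b)` then gives `λ₋ ~ -b`.
-/

section Algebra

open Polynomial

-- Sediment lost by the bed is gained by the fluid, so the rows `(p, -a)` and `(-k, r)` of the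
-- exchange matrix `A₀` are proportional; this is the hypothesis `h`.
theorem charpoly_fin_three_of_mul_eq_mul {R : Type*} [CommRing R] {a b k p r : R} (κ : R)
    (h : p * r = a * k) :
    (!![-b, 0, -b; p, -a, 0; -k, r, -κ] : Matrix (Fin 3) (Fin 3) R).charpoly =
      (X + C a) * (X + C b) * (X + C κ) - C (b * k) * X := by
  have hC : (C p * C r : R[X]) = C a * C k := by rw [← C_mul, h, C_mul]
  have hchar : (!![-b, 0, -b; p, -a, 0; -k, r, -κ] : Matrix (Fin 3) (Fin 3) R).charmatrix =
      !![X + C b, 0, C b; -C p, X + C a, 0; C k, -C r, X + C κ] := by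
    ext1 i j
    fin_cases i <;> fin_cases j <;> simp
  rw [Matrix.charpoly, hchar, Matrix.det_fin_three, C_mul]
  simp only [Matrix.of_apply, Matrix.cons_val]
  linear_combination C b * hC

theorem landA_zero_left (α hb cb ρs s e m n T K η : ℝ) :
    landA α hb cb ρs s e m n T K 0 η =
      (!![-(α * hb * η ^ 2), 0, -(α * hb * η ^ 2);
          s * ρs / (e * hb) * m * cb / hb, -(s * ρs / (e * hb)), 0;
          -(s * ρs / (e * hb) * m * cb / ρs), s * ρs / (e * hb) * hb / ρs, -(K * η ^ 2)] :
        Matrix (Fin 3) (Fin 3) ℝ).map Complex.ofRealHom := by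
  ext i j
  fin_cases i <;> fin_cases j <;> simp [landA, mul_comm]

theorem lamP_add_lamM (α hb cb ρs a m η : ℝ) :
    lamP α hb cb ρs a m η + lamM α hb cb ρs a m η = -(a + α * hb * η ^ 2) := by
  unfold lamP lamM
  ring

theorem lamP_mul_lamM {α hb cb ρs a m η : ℝ}
    (hdisc : 0 ≤ (a - α * hb * η ^ 2) ^ 2 + 4 * α * η ^ 2 * a * m * hb * cb / ρs) :
    lamP α hb cb ρs a m η * lamM α hb cb ρs a m η =
      α * hb * η ^ 2 * (a - a * m * cb / ρs) := by
  unfold lamP lamM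
  linear_combination (-1 / 4) * Real.sq_sqrt hdisc

theorem charpoly_landA_zero_left {α hb cb ρs s e m η : ℝ} (n T : ℝ) (hhb : hb ≠ 0)
    (hdisc : 0 ≤ (s * ρs / (e * hb) - α * hb * η ^ 2) ^ 2 +
      4 * α * η ^ 2 * (s * ρs / (e * hb)) * m * hb * cb / ρs) :
    (landA α hb cb ρs s e m n T 0 0 η).charpoly =
      (X * (X - C (lamP α hb cb ρs (s * ρs / (e * hb)) m η)) *
        (X - C (lamM α hb cb ρs (s * ρs / (e * hb)) m η))).map Complex.ofRealHom := by
  have hsum := congrArg (C : ℝ → ℝ[X]) (lamP_add_lamM α hb cb ρs (s * ρs / (e * hb)) m η)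
  have hprod := congrArg (C : ℝ → ℝ[X]) (lamP_mul_lamM hdisc)
  rw [landA_zero_left, Matrix.charpoly_map, charpoly_fin_three_of_mul_eq_mul _ (by field_simp)]
  congr 1
  simp only [zero_mul, C_0, C_add, C_sub, C_neg, C_mul] at hsum hprod ⊢
  linear_combination X ^ 2 * hsum - X * hprod

end Algebra

section Asymptotics

open Topology

theorem tendsto_sqrt_sq_add_sub_self (c : ℝ) :
    Tendsto (fun x : ℝ => √(x ^ 2 + c) - x) atTop (𝓝 0) := by
  have hden : Tendsto (fun x : ℝ => √(x ^ 2 + c) + x) atTop atTop :=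
    tendsto_atTop_mono (fun x => le_add_of_nonneg_left (Real.sqrt_nonneg _)) tendsto_id
  have hrad : Tendsto (fun x : ℝ => x ^ 2 + c) atTop atTop :=
    tendsto_atTop_add_const_right _ _ (tendsto_pow_atTop two_ne_zero)
  refine (hden.const_div_atTop c).congr' ?_
  filter_upwards [hden.eventually_gt_atTop 0, hrad.eventually_ge_atTop 0] with x hpos hx
  rw [div_eq_iff hpos.ne']
  linear_combination -Real.sq_sqrt hx

theorem tendsto_larger_root (a k : ℝ) :
    Tendsto (fun b : ℝ => (-(a + b) + √((a - b) ^ 2 + 4 * k * b)) / 2) atTop (𝓝 (k - a)) := by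
  have hshift : Tendsto (fun b : ℝ => b + (2 * k - a)) atTop atTop :=
    tendsto_atTop_add_const_right _ _ tendsto_id
  have hsqrt := (tendsto_sqrt_sq_add_sub_self (4 * k * (a - k))).comp hshift
  convert (hsqrt.div_const 2).add_const (k - a) using 2 with b
  · have hsq : (a - b) ^ 2 + 4 * k * b = (b + (2 * k - a)) ^ 2 + 4 * k * (a - k) := by ring
    rw [hsq, Function.comp_apply]
    ring
  · ring

variable {α hb : ℝ} (cb ρs a m : ℝ)

theorem tendsto_lamP (h : 0 < α * hb) :
    Tendsto (lamP α hb cb ρs a m) atTop (𝓝 (a * (m * cb / ρs - 1))) := by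
  have htop : Tendsto (fun η : ℝ => α * hb * η ^ 2) atTop atTop :=
    (tendsto_pow_atTop two_ne_zero).const_mul_atTop h
  convert (tendsto_larger_root a (a * m * cb / ρs)).comp htop using 2
  · ext η
    unfold lamP
    simp only [Function.comp_apply]
    ring_nf
  · ring

theorem tendsto_lamM_div_sq (h : 0 < α * hb) :
    Tendsto (fun η : ℝ => lamM α hb cb ρs a m η / η ^ 2) atTop (𝓝 (-(α * hb))) := by
  have hrem : Tendsto (fun η : ℝ => (a + lamP α hb cb ρs a m η) / η ^ 2) atTop (𝓝 0) :=
    ((tendsto_lamP cb ρs a m h).const_add a).div_atTop (tendsto_pow_atTop two_ne_zero)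
  rw [← sub_zero (-(α * hb))]
  refine (hrem.const_sub _).congr' ?_
  filter_upwards [eventually_ne_atTop 0] with η hη
  field_simp
  linear_combination -lamP_add_lamM α hb cb ρs a m η

end Asymptotics

/-- High-frequency asymptotics of the transverse spectrum when `K = 0`:
`λ±(η)` are eigenvalues of `A(0,η)`, and as `η → +∞`,
`λ₊(η) → a(mc̄/ρ̄ₛ − 1)` while `λ₋(η)/η² → −αh̄`. -/
theorem transverse_no_creep_high_frequency (α hb cb ρs s e m n T : ℝ)
    (hα : 0 < α) (hhb : 0 < hb) (hcb : 0 < cb) (hρs : 0 < ρs)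
    (hs : 0 < s) (he : 0 < e) (hm : 0 < m) (hn : 0 < n) (hT : 0 < T) :
    (∀ η : ℝ, 0 < η →
      (landA α hb cb ρs s e m n T 0 0 η).charpoly.IsRoot
        ((lamP α hb cb ρs (s * ρs / (e * hb)) m η : ℝ) : ℂ) ∧
      (landA α hb cb ρs s e m n T 0 0 η).charpoly.IsRoot
        ((lamM α hb cb ρs (s * ρs / (e * hb)) m η : ℝ) : ℂ)) ∧
    Tendsto (fun η : ℝ => lamP α hb cb ρs (s * ρs / (e * hb)) m η) atTop
      (nhds ((s * ρs / (e * hb)) * (m * cb / ρs - 1))) ∧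
    Tendsto (fun η : ℝ => lamM α hb cb ρs (s * ρs / (e * hb)) m η / η ^ 2) atTop
      (nhds (-(α * hb))) := by
  have hαhb : 0 < α * hb := mul_pos hα hhb
  refine ⟨fun η _ => ?_, tendsto_lamP cb ρs _ m hαhb, tendsto_lamM_div_sq cb ρs _ m hαhb⟩
  rw [charpoly_landA_zero_left n T hhb.ne' (by positivity)]
  exact ⟨Polynomial.IsRoot.map (by simp), Polynomial.IsRoot.map (by simp)⟩
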